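/- Let X and Y be Polish spaces, c : X×Y → [0,∞] lower semicontinuous, L : Y → [0,∞] lower semicontinuous with compact sublevel sets, and H : Y×Y → [0,∞] lower semicontinuous and symmetric. Assume Hypothesis (E) holds with Borel gluing map G and constant C > 0. Then for all μ0, μ1 ∈ P(X) and every γ0 ∈ P_{μ0}(X×Y), there exists γ1 ∈ P_{μ1}(X×Y) such that J(γ1) ≤ J(γ0) + 4C·W1(μ0,μ1), where J(γ) := ∫_{X×Y} c dγ + ∫_Y L d((π_Y)_♯γ) + ∫_{Y×Y} H d((π_Y)_♯γ)⊗((π_Y)_♯γ). -/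

import Mathlib

open MeasureTheory Filter Topology

/-!
Among the couplings of `μ₀` and `μ₁` there is one, `π`, of least cost: the set of couplings is
weakly compact by Prokhorov's theorem, and the integral of a lower semicontinuous cost is weakly
lower semicontinuous, by the layer cake formula and the portmanteau theorem for the open
superlevel sets. Glue `π` with `γ₀` along `μ₀` to get a law `η` of triples `((x₀, x₁), y)`, and let
`γ₁` be the law of `(x₁, G (x₁, x₀, y))`. Under `η` each of the first two terms of the energy grows
by at most `C W₁`, and under `η ⊗ η` the interaction term grows by at most `2 C W₁`.
-/

open ProbabilityTheory Set
open scoped ENNReal NNReal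

section WeakLowerSemicontinuity

lemma volume_restrict_Ioi_setOfPred_ofReal_lt (a : ℝ≥0∞) :
    volume.restrict (Ioi 0) {t : ℝ | ENNReal.ofReal t < a} = a := by
  rw [Measure.restrict_apply (measurableSet_lt (by fun_prop) (by fun_prop)), inter_comm]
  cases a with
  | top => simp
  | coe r =>
    have hIoo : Ioi 0 ∩ {t : ℝ | ENNReal.ofReal t < r} = Ioo 0 (r : ℝ) := by
      ext t
      exact and_congr_right fun ht ↦ by
        rw [mem_ofPred_eq, ← ENNReal.ofReal_coe_nnreal,
          ENNReal.ofReal_lt_ofReal_iff_of_nonneg ht.le]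
    rw [hIoo, Real.volume_Ioo, sub_zero, ENNReal.ofReal_coe_nnreal]

variable {Ω : Type*} [MeasurableSpace Ω]

lemma lintegral_eq_lintegral_measure_ofReal_lt (μ : Measure Ω) [SFinite μ] {f : Ω → ℝ≥0∞}
    (hf : Measurable f) :
    ∫⁻ ω, f ω ∂μ = ∫⁻ t in Ioi (0 : ℝ), μ {ω | ENNReal.ofReal t < f ω} := by
  have hs : MeasurableSet {p : Ω × ℝ | ENNReal.ofReal p.2 < f p.1} :=
    measurableSet_lt (by fun_prop) (by fun_prop)
  calc ∫⁻ ω, f ω ∂μ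
      = ∫⁻ ω, volume.restrict (Ioi 0) {t : ℝ | ENNReal.ofReal t < f ω} ∂μ := by
        simp only [volume_restrict_Ioi_setOfPred_ofReal_lt]
    _ = μ.prod (volume.restrict (Ioi 0)) {p : Ω × ℝ | ENNReal.ofReal p.2 < f p.1} :=
        (Measure.prod_apply hs).symm
    _ = ∫⁻ t in Ioi (0 : ℝ), μ {ω | ENNReal.ofReal t < f ω} := Measure.prod_apply_symm hs

lemma lowerSemicontinuous_lintegral_probabilityMeasure [TopologicalSpace Ω]
    [TopologicalSpace.PseudoMetrizableSpace Ω] [TopologicalSpace.SeparableSpace Ω]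
    [OpensMeasurableSpace Ω] {f : Ω → ℝ≥0∞} (hf : LowerSemicontinuous f) :
    LowerSemicontinuous fun μ : ProbabilityMeasure Ω ↦ ∫⁻ ω, f ω ∂(μ : Measure Ω) := by
  simp only [lintegral_eq_lintegral_measure_ofReal_lt _ hf.measurable]
  refine lowerSemicontinuous_iff_le_liminf.2 fun μ ↦ ?_
  calc ∫⁻ t in Ioi (0 : ℝ), (μ : Measure Ω) {ω | ENNReal.ofReal t < f ω}
      ≤ ∫⁻ t in Ioi (0 : ℝ), liminf (fun ν : ProbabilityMeasure Ω ↦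
          (ν : Measure Ω) {ω | ENNReal.ofReal t < f ω}) (𝓝 μ) :=
        lintegral_mono fun t ↦ ProbabilityMeasure.le_liminf_measure_open_of_tendsto tendsto_id
          (hf.isOpen_preimage (ENNReal.ofReal t))
    _ ≤ liminf (fun ν : ProbabilityMeasure Ω ↦
          ∫⁻ t in Ioi (0 : ℝ), (ν : Measure Ω) {ω | ENNReal.ofReal t < f ω}) (𝓝 μ) :=
        lintegral_liminf_le fun ν ↦ Antitone.measurable fun s t hst ↦
          measure_mono fun ω hω ↦ (ENNReal.ofReal_le_ofReal hst).trans_lt hω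

end WeakLowerSemicontinuity

section OptimalCoupling

variable {X Y : Type*} [MeasurableSpace X] [MeasurableSpace Y]

/-- The couplings of `μ` and `ν`: the probability measures on the product with marginals `μ` and
`ν`, taken as plain measures. -/
def couplings (μ : Measure X) (ν : Measure Y) : Set (Measure (X × Y)) :=
  {π | IsProbabilityMeasure π ∧ π.map Prod.fst = μ ∧ π.map Prod.snd = ν}

/-- The optimal transport cost from `μ` to `ν` for the cost function `d`; it is the Wasserstein
distance of order one when `d` is the distance. -/
noncomputable def transportCost (d : X × Y → ℝ≥0∞) (μ : Measure X) (ν : Measure Y) : ℝ≥0∞ :=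
  ⨅ π ∈ couplings μ ν, ∫⁻ p, d p ∂π

lemma prod_mem_couplings (μ : Measure X) (ν : Measure Y) [IsProbabilityMeasure μ]
    [IsProbabilityMeasure ν] : μ.prod ν ∈ couplings μ ν :=
  ⟨inferInstance, measurePreserving_fst.map_eq, measurePreserving_snd.map_eq⟩

variable [TopologicalSpace X] [TopologicalSpace Y] {μ : Measure X} {ν : Measure Y}

lemma isTightMeasureSet_couplings (hμ : IsTightMeasureSet {μ}) (hν : IsTightMeasureSet {ν}) :
    IsTightMeasureSet (couplings μ ν) :=
  .prodMk (hμ.subset (image_subset_iff.2 fun _ hπ ↦ hπ.2.1))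
    (hν.subset (image_subset_iff.2 fun _ hπ ↦ hπ.2.2))

lemma isClosed_setOfPred_mem_couplings [HasOuterApproxClosed X] [BorelSpace X]
    [HasOuterApproxClosed Y] [BorelSpace Y] [OpensMeasurableSpace (X × Y)] [IsProbabilityMeasure μ]
    [IsProbabilityMeasure ν] :
    IsClosed {π : ProbabilityMeasure (X × Y) | (π : Measure (X × Y)) ∈ couplings μ ν} := by
  have hfst := (isClosed_singleton (X := ProbabilityMeasure X) (x := ⟨μ, inferInstance⟩)).preimage
    (ProbabilityMeasure.continuous_map (continuous_fst (X := X) (Y := Y)))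
  have hsnd := (isClosed_singleton (X := ProbabilityMeasure Y) (x := ⟨ν, inferInstance⟩)).preimage
    (ProbabilityMeasure.continuous_map (continuous_snd (X := X) (Y := Y)))
  convert hfst.inter hsnd using 1
  ext π
  exact ⟨fun h ↦ ⟨Subtype.ext h.2.1, Subtype.ext h.2.2⟩,
    fun h ↦ ⟨π.2, congrArg Subtype.val h.1, congrArg Subtype.val h.2⟩⟩

variable [PolishSpace X] [BorelSpace X] [PolishSpace Y] [BorelSpace Y]

lemma isCompact_setOfPred_mem_couplings (μ : Measure X) (ν : Measure Y) [IsProbabilityMeasure μ]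
    [IsProbabilityMeasure ν] :
    IsCompact {π : ProbabilityMeasure (X × Y) | (π : Measure (X × Y)) ∈ couplings μ ν} := by
  rw [← isClosed_setOfPred_mem_couplings.closure_eq]
  refine isCompact_closure_of_isTightMeasureSet <|
    (isTightMeasureSet_couplings (μ := μ) (ν := ν)
      isTightMeasureSet_singleton isTightMeasureSet_singleton).subset ?_
  rintro _ ⟨π, hπ, rfl⟩
  exact hπ

lemma exists_mem_couplings_lintegral_eq_transportCost {d : X × Y → ℝ≥0∞}
    (hd : LowerSemicontinuous d) (μ : Measure X) (ν : Measure Y) [IsProbabilityMeasure μ]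
    [IsProbabilityMeasure ν] : ∃ π ∈ couplings μ ν, ∫⁻ p, d p ∂π = transportCost d μ ν := by
  obtain ⟨π, hπ, hmin⟩ := LowerSemicontinuousOn.exists_isMinOn
    (s := {π : ProbabilityMeasure (X × Y) | (π : Measure (X × Y)) ∈ couplings μ ν})
    ⟨⟨μ.prod ν, inferInstance⟩, prod_mem_couplings μ ν⟩ (isCompact_setOfPred_mem_couplings μ ν)
    ((lowerSemicontinuous_lintegral_probabilityMeasure hd).lowerSemicontinuousOn _)
  exact ⟨π, hπ, le_antisymm (le_iInf₂ fun ρ hρ ↦ hmin (a := ⟨ρ, hρ.1⟩) hρ)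
    (iInf₂_le (π : Measure (X × Y)) hπ)⟩

end OptimalCoupling

section Gluing

variable {X Y Z : Type*} [MeasurableSpace X] [MeasurableSpace Y] [MeasurableSpace Z]

lemma map_prodMap_id_compProd_comap (μ : Measure X) [SFinite μ] (κ : Kernel Z Y) [IsSFiniteKernel κ]
    {f : X → Z} (hf : Measurable f) :
    (μ ⊗ₘ κ.comap f hf).map (Prod.map f id) = μ.map f ⊗ₘ κ := by
  refine Measure.ext_of_lintegral _ fun g hg ↦ ?_
  rw [lintegral_map hg (by fun_prop), Measure.lintegral_compProd (by fun_prop),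
    Measure.lintegral_compProd hg, lintegral_map hg.lintegral_kernel_prod_right' hf]
  rfl

lemma exists_map_fst_eq_and_map_prodMap_fst_eq [StandardBorelSpace Y] {π : Measure (X × Z)}
    {γ : Measure (X × Y)} [IsFiniteMeasure γ] (h : π.map Prod.fst = γ.map Prod.fst) :
    ∃ η : Measure ((X × Z) × Y), η.map Prod.fst = π ∧ η.map (Prod.map Prod.fst id) = γ := by
  have hπ : IsFiniteMeasure (π.map Prod.fst) := h ▸ inferInstance
  have : IsFiniteMeasure π := Measure.isFiniteMeasure_of_map measurable_fst.aemeasurable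
  rcases isEmpty_or_nonempty Y with hY | hY
  · have hγ : γ = 0 := γ.eq_zero_of_isEmpty
    refine ⟨0, ?_, by simp [hγ]⟩
    rw [hγ, Measure.map_zero, Measure.map_eq_zero_iff measurable_fst.aemeasurable] at h
    rw [h, Measure.map_zero]
  · refine ⟨π ⊗ₘ γ.condKernel.comap Prod.fst measurable_fst, Measure.fst_compProd _ _, ?_⟩
    rw [map_prodMap_id_compProd_comap, h]
    exact γ.disintegrate γ.condKernel

end Gluing

section Energy

variable {Ω α : Type*} [MeasurableSpace Ω] [MeasurableSpace α]

lemma lintegral_map_le_lintegral_map_add {η : Measure Ω} {f : α → ℝ≥0∞} {S T : Ω → α}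
    {δ : Ω → ℝ≥0∞} (hf : Measurable f) (hS : Measurable S)
    (h : ∀ ω, f (T ω) ≤ f (S ω) + δ ω) :
    ∫⁻ a, f a ∂(η.map T) ≤ ∫⁻ a, f a ∂(η.map S) + ∫⁻ ω, δ ω ∂η :=
  calc ∫⁻ a, f a ∂(η.map T) ≤ ∫⁻ ω, f (T ω) ∂η := lintegral_map_le f T
    _ ≤ ∫⁻ ω, (f (S ω) + δ ω) ∂η := lintegral_mono h
    _ = ∫⁻ a, f a ∂(η.map S) + ∫⁻ ω, δ ω ∂η := by
      rw [lintegral_add_left (by fun_prop), lintegral_map hf hS]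

lemma lintegral_prod_fst_add_snd (μ : Measure Ω) (ν : Measure α) [IsProbabilityMeasure μ]
    [IsProbabilityMeasure ν] {f : Ω → ℝ≥0∞} {g : α → ℝ≥0∞} (hf : Measurable f)
    (hg : Measurable g) :
    ∫⁻ r, (f r.1 + g r.2) ∂(μ.prod ν) = ∫⁻ ω, f ω ∂μ + ∫⁻ a, g a ∂ν := by
  rw [lintegral_add_left (by fun_prop), measurePreserving_fst.lintegral_comp hf,
    measurePreserving_snd.lintegral_comp hg]

variable {X Y : Type*} [MeasurableSpace X] [MeasurableSpace Y]

/-- The potential energy `J` of a plan `γ`: the cost `c` of the plan, plus the potential `L` and the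
pairwise interaction `H` of its second marginal. -/
noncomputable def planEnergy (c : X × Y → ℝ≥0∞) (L : Y → ℝ≥0∞) (H : Y × Y → ℝ≥0∞)
    (γ : Measure (X × Y)) : ℝ≥0∞ :=
  ∫⁻ p, c p ∂γ + ∫⁻ y, L y ∂(γ.map Prod.snd) +
    ∫⁻ q, H q ∂((γ.map Prod.snd).prod (γ.map Prod.snd))

variable {c : X × Y → ℝ≥0∞} {L : Y → ℝ≥0∞} {H : Y × Y → ℝ≥0∞}

lemma planEnergy_map (η : Measure Ω) [SFinite η] {T : Ω → X × Y} (hT : Measurable T) :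
    planEnergy c L H (η.map T) = ∫⁻ p, c p ∂(η.map T) + ∫⁻ y, L y ∂(η.map fun ω ↦ (T ω).2) +
      ∫⁻ q, H q ∂((η.prod η).map fun r ↦ ((T r.1).2, (T r.2).2)) := by
  rw [planEnergy, Measure.map_map measurable_snd hT,
    Measure.map_prod_map η η (measurable_snd.comp hT) (measurable_snd.comp hT)]
  rfl

lemma planEnergy_map_le_add (hc : Measurable c) (hL : Measurable L) (hH : Measurable H)
    {η : Measure Ω} [IsProbabilityMeasure η] {S T : Ω → X × Y} {δ : Ω → ℝ≥0∞} (hS : Measurable S)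
    (hT : Measurable T) (hδ : Measurable δ) (hcδ : ∀ ω, c (T ω) ≤ c (S ω) + δ ω)
    (hLδ : ∀ ω, L (T ω).2 ≤ L (S ω).2 + δ ω)
    (hHδ : ∀ ω ω', H ((T ω).2, (T ω').2) ≤ H ((S ω).2, (S ω').2) + (δ ω + δ ω')) :
    planEnergy c L H (η.map T) ≤ planEnergy c L H (η.map S) + 4 * ∫⁻ ω, δ ω ∂η := by
  have hc_le := lintegral_map_le_lintegral_map_add (η := η) hc hS hcδ
  have hL_le := lintegral_map_le_lintegral_map_add (η := η) (S := fun ω ↦ (S ω).2)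
    (T := fun ω ↦ (T ω).2) hL (by fun_prop) hLδ
  have hH_le := lintegral_map_le_lintegral_map_add (η := η.prod η) (δ := fun r ↦ δ r.1 + δ r.2)
    (S := fun r ↦ ((S r.1).2, (S r.2).2)) (T := fun r ↦ ((T r.1).2, (T r.2).2)) hH (by fun_prop)
    fun r ↦ hHδ r.1 r.2
  rw [lintegral_prod_fst_add_snd η η hδ hδ] at hH_le
  rw [planEnergy_map η hT, planEnergy_map η hS]
  exact (add_le_add (add_le_add hc_le hL_le) hH_le).trans_eq (by ring)

end Energy

theorem gluing_method_general {X Y : Type*}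
    [TopologicalSpace X] [PolishSpace X] [MeasurableSpace X] [BorelSpace X]
    [MeasurableSpace Y] [StandardBorelSpace Y]
    {c : X × Y → ℝ≥0∞} (hc : Measurable c) {L : Y → ℝ≥0∞} (hL : Measurable L)
    {H : Y × Y → ℝ≥0∞} (hH : Measurable H) {d : X × X → ℝ≥0∞} (hd : LowerSemicontinuous d)
    {G : X × X × Y → Y} (hG : Measurable G) {C : ℝ≥0∞}
    (hGc : ∀ x₀ x₁ y, c (x₁, G (x₁, x₀, y)) ≤ c (x₀, y) + C * d (x₀, x₁))
    (hGL : ∀ x₀ x₁ y, L (G (x₁, x₀, y)) ≤ L y + C * d (x₀, x₁))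
    (hGH : ∀ x₀ x₁ x₀' x₁' y y',
      H (G (x₁, x₀, y), G (x₁', x₀', y')) ≤ H (y, y') + C * (d (x₀, x₁) + d (x₀', x₁')))
    {μ₀ μ₁ : Measure X} [IsProbabilityMeasure μ₁]
    {γ₀ : Measure (X × Y)} [IsProbabilityMeasure γ₀] (hγ₀ : γ₀.map Prod.fst = μ₀) :
    ∃ γ₁ : Measure (X × Y), IsProbabilityMeasure γ₁ ∧ γ₁.map Prod.fst = μ₁ ∧
      planEnergy c L H γ₁ ≤ planEnergy c L H γ₀ + 4 * C * transportCost d μ₀ μ₁ := by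
  have : IsProbabilityMeasure μ₀ := hγ₀ ▸ Measure.isProbabilityMeasure_map (by fun_prop)
  obtain ⟨π, ⟨hπ, hπ₀, hπ₁⟩, hcost⟩ := exists_mem_couplings_lintegral_eq_transportCost hd μ₀ μ₁
  obtain ⟨η, rfl, rfl⟩ := exists_map_fst_eq_and_map_prodMap_fst_eq (hπ₀.trans hγ₀.symm)
  have : IsProbabilityMeasure η := Measure.isProbabilityMeasure_of_map Prod.fst
  have hdm : Measurable d := hd.measurable
  let T : (X × X) × Y → X × Y := fun ω ↦ (ω.1.2, G (ω.1.2, ω.1.1, ω.2))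
  have hT : Measurable T := by fun_prop
  refine ⟨η.map T, Measure.isProbabilityMeasure_map hT.aemeasurable, ?_, ?_⟩
  · rw [← hπ₁, Measure.map_map measurable_fst hT, Measure.map_map measurable_snd measurable_fst]
    rfl
  have hδ : ∫⁻ ω, C * d ω.1 ∂η = C * transportCost d μ₀ μ₁ := by
    rw [lintegral_const_mul C (by fun_prop), ← hcost, lintegral_map hdm measurable_fst]
  rw [mul_assoc, ← hδ]
  exact planEnergy_map_le_add hc hL hH (by fun_prop) hT (by fun_prop) (fun _ ↦ hGc _ _ _)
    (fun _ ↦ hGL _ _ _) fun _ _ ↦ mul_add C _ _ ▸ hGH _ _ _ _ _ _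

/-- **gluing method.** Under Hypothesis (E) (existence of a consistent Borel gluing
map `G` with Lipschitz-type estimates of constant `C`), for any distributions `μ0, μ1` of players
and any plan `γ0` with first marginal `μ0` there is a plan `γ1` with first marginal `μ1` whose
potential energy `J` exceeds that of `γ0` by at most `4 C W₁(μ0, μ1)`. -/
theorem gluing_method
    {X Y : Type*}
    [MetricSpace X] [CompleteSpace X] [SecondCountableTopology X]
    [MeasurableSpace X] [BorelSpace X]
    [TopologicalSpace Y] [PolishSpace Y] [MeasurableSpace Y] [BorelSpace Y]
    (c : X × Y → ENNReal) (hc : LowerSemicontinuous c)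
    (L : Y → ENNReal) (hL : LowerSemicontinuous L)
    (hLcomp : ∀ κ : NNReal, 0 < κ → IsCompact {y : Y | L y ≤ (κ : ENNReal)})
    (H : Y × Y → ENNReal) (hH : LowerSemicontinuous H)
    (hHsymm : ∀ y y' : Y, H (y, y') = H (y', y))
    (J : Measure (X × Y) → ENNReal)
    (hJ : ∀ γ : Measure (X × Y), J γ =
      ∫⁻ p, c p ∂γ + ∫⁻ y, L y ∂(γ.map Prod.snd) +
        ∫⁻ q, H q ∂((γ.map Prod.snd).prod (γ.map Prod.snd)))
    -- Hypothesis (E): Borel gluing map with constant C > 0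
    (G : X × X × Y → Y) (hGmeas : Measurable G)
    (hGcons : ∀ (x : X) (y : Y), G (x, x, y) = y)
    (C : ENNReal) (hCpos : 0 < C) (hCfin : C < ⊤)
    (hGc : ∀ (x0 x1 : X) (y : Y),
      c (x1, G (x1, x0, y)) ≤ c (x0, y) + C * edist x1 x0)
    (hGL : ∀ (x0 x1 : X) (y : Y),
      L (G (x1, x0, y)) ≤ L y + C * edist x1 x0)
    (hGH : ∀ (x0 x1 x0' x1' : X) (y y' : Y),
      H (G (x1, x0, y), G (x1', x0', y')) ≤ H (y, y') + C * (edist x1 x0 + edist x1' x0'))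
    (μ0 μ1 : Measure X) [IsProbabilityMeasure μ0] [IsProbabilityMeasure μ1]
    (γ0 : Measure (X × Y)) [IsProbabilityMeasure γ0] (hγ0 : γ0.map Prod.fst = μ0) :
    ∃ γ1 : Measure (X × Y), IsProbabilityMeasure γ1 ∧ γ1.map Prod.fst = μ1 ∧
      J γ1 ≤ J γ0 + 4 * C *
        ⨅ π ∈ {π : Measure (X × X) | IsProbabilityMeasure π ∧
            π.map Prod.fst = μ0 ∧ π.map Prod.snd = μ1},
          ∫⁻ p, edist p.1 p.2 ∂π := by
  obtain rfl : J = planEnergy c L H := funext hJ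
  exact gluing_method_general hc.measurable hL.measurable hH.measurable
    continuous_edist.lowerSemicontinuous hGmeas
    (fun x0 x1 y ↦ edist_comm x1 x0 ▸ hGc x0 x1 y) (fun x0 x1 y ↦ edist_comm x1 x0 ▸ hGL x0 x1 y)
    (fun x0 x1 x0' x1' y y' ↦
      edist_comm x1 x0 ▸ edist_comm x1' x0' ▸ hGH x0 x1 x0' x1' y y') hγ0
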